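/- Let V be an n-dimensional vector space over the finite field 𝔽_q with n ≥ 2t+1 and t ≥ 1, and let F be a cover-free family of 2t-dimensional subspaces of V with |F| = [n-1 choose t]_q / [2t-1 choose t]_q. Then for every t-dimensional subspace A of V, |F_A| is either 1 or (q^{n-t}-1)/(q^t-1). -/

import Mathlib

/-- A family of subspaces is cover-free if there are no three distinct members
`F₀, F₁, F₂` with `F₀ ≤ (F₀ ⊓ F₁) ⊔ (F₀ ⊓ F₂)`. -/
def IsCoverFree {K V : Type*} [Field K] [AddCommGroup V] [Module K V]
    (F : Set (Submodule K V)) : Prop :=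
  ¬ ∃ F₀ F₁ F₂ : Submodule K V, F₀ ∈ F ∧ F₁ ∈ F ∧ F₂ ∈ F ∧
    F₀ ≠ F₁ ∧ F₀ ≠ F₂ ∧ F₁ ≠ F₂ ∧ F₀ ≤ (F₀ ⊓ F₁) ⊔ (F₀ ⊓ F₂)

/-- The Gaussian binomial coefficient `[m choose k]_q` as a rational number. -/
def GaussQ (q m k : ℕ) : ℚ :=
  ∏ i ∈ Finset.range k, ((q : ℚ) ^ (m - i) - 1) / ((q : ℚ) ^ (k - i) - 1)

/-! Count pairs of an independent `t`-tuple `x` and a member `G` of the family, with weights.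
A `t`-subspace of `G` is own if it lies in no other member. As the family is cover-free, one of two
complementary `t`-subspaces of `G` is own, so the spans of the other tuples of `G` meet pairwise;
partitioning `G` by a spread then bounds the number of those tuples, as in the Erdős–Ko–Rado theorem
for vector spaces.

Give weight `1` to the own tuples of `G` and weight `μ = (q ^ t - 1) / (q ^ (n - t) - 1)` to the
others. If all members through the span of `x` meet pairwise exactly in that span, there are at most
`μ⁻¹` of them, so `x` receives total weight at most `1`. A member meeting another in dimension
greater than `t` could violate this. It gives up its weights `μ`, but it has so many own subspaces
of dimension `t - 1` that extending their bases by one outside vector compensates for the loss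
strictly. The assumption on `|F|` is that both bounds give the same total, so all of them are
equalities: no two members meet in dimension greater than `t`, and a `t`-subspace lies in one
member, as its own subspace, or in exactly `μ⁻¹` of them. -/

open Module MulAction
open scoped Finset LinearAlgebra.Projectivization

theorem sum_eq_of_le_sum_of_sum_le {α β M : Type*} [AddCommMonoid M] [PartialOrder M]
    [IsOrderedCancelAddMonoid M] {s : Finset α} {t : Finset β} {f : α → β → M} {c d : M}
    (hs : ∀ a ∈ s, c ≤ ∑ b ∈ t, f a b) (ht : ∀ b ∈ t, ∑ a ∈ s, f a b ≤ d)
    (h : #s • c = #t • d) :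
    (∀ a ∈ s, ∑ b ∈ t, f a b = c) ∧ ∀ b ∈ t, ∑ a ∈ s, f a b = d := by
  have hle : ∑ _a ∈ s, c ≤ ∑ a ∈ s, ∑ b ∈ t, f a b := Finset.sum_le_sum hs
  have hge : ∑ b ∈ t, ∑ a ∈ s, f a b ≤ ∑ _b ∈ t, d := Finset.sum_le_sum ht
  rw [Finset.sum_const, h] at hle
  rw [Finset.sum_comm, Finset.sum_const] at hge
  have heq := le_antisymm hge hle
  constructor
  · refine fun a ha ↦ ((Finset.sum_eq_sum_iff_of_le hs).1 ?_ a ha).symm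
    rw [Finset.sum_const, h, heq]
  · refine (Finset.sum_eq_sum_iff_of_le ht).1 ?_
    rw [Finset.sum_comm, Finset.sum_const, heq]

theorem card_smul_eq_of_mem_orbit {G α : Type*} [Group G] [MulAction G α] {a x y : α}
    (hx : x ∈ orbit G a) (hy : y ∈ orbit G a) :
    Nat.card {g : G // g • x = y} = Nat.card (stabilizer G a) := by
  obtain ⟨g, rfl⟩ := hx
  obtain ⟨h, rfl⟩ := hy
  refine Nat.card_congr (((Equiv.mulRight g).trans (Equiv.mulLeft h⁻¹)).subtypeEquiv fun k ↦ ?_)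
  simp [mul_smul, inv_smul_eq_iff]

open Classical in
theorem card_mul_card_le_ncard_orbit {G α ι : Type*} [Group G] [Finite G] [MulAction G α]
    [Fintype ι] {a : α} {f : ι → α} {N : Finset α} (hf : ∀ i, f i ∈ orbit G a)
    (hN : ∀ x ∈ N, x ∈ orbit G a)
    (hfN : ∀ (g : G) i j, g • f i ∈ N → g • f j ∈ N → i = j) :
    Fintype.card ι * #N ≤ (orbit G a).ncard := by
  have := Fintype.ofFinite G
  refine Nat.le_of_mul_le_mul_right ?_ (Nat.card_pos (α := stabilizer G a))
  have hcount := Finset.card_mul_le_card_mul (s := Finset.univ ×ˢ N) (t := .univ)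
    (fun (p : ι × α) (g : G) ↦ g • f p.1 = p.2) (m := Nat.card (stabilizer G a)) (n := 1)
    ?_ fun g _ ↦ ?_
  · rw [Finset.card_product, Finset.card_univ, mul_one, Finset.card_univ,
      ← Nat.card_eq_fintype_card (α := G)] at hcount
    rwa [← index_stabilizer, Subgroup.index_mul_card]
  · rintro ⟨i, x⟩ hix
    rw [← card_smul_eq_of_mem_orbit (hf i) (hN x (Finset.mem_product.1 hix).2)]
    exact (Nat.subtype_card _ fun g ↦ by simp [Finset.mem_bipartiteAbove]).le
  · rw [Finset.card_le_one]
    rintro ⟨i, x⟩ hi ⟨j, y⟩ hj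
    simp only [Finset.mem_bipartiteBelow, Finset.mem_product, Finset.mem_univ, true_and] at hi hj
    obtain ⟨hx, rfl⟩ := hi
    obtain ⟨hy, rfl⟩ := hj
    obtain rfl := hfN g i j hx hy
    rfl

theorem disjoint_restrictScalars_submodule {K L M : Type*} [Semiring K] [DivisionRing L]
    [AddCommGroup M] [Module K M] [Module L M] [SMul K L] [IsScalarTower K L M]
    {P Q : ℙ L M} (h : P ≠ Q) :
    Disjoint (P.submodule.restrictScalars K) (Q.submodule.restrictScalars K) := by
  have hatom (P : ℙ L M) : IsAtom P.submodule :=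
    Submodule.isAtom_iff_finrank_eq_one.2 P.finrank_submodule
  have hdisj := (hatom P).disjoint_of_ne (hatom Q) (Projectivization.submodule_injective.ne h)
  rw [Submodule.disjoint_def] at hdisj ⊢
  exact hdisj

theorem finrank_restrictScalars_submodule {K L M : Type*} [Field K] [DivisionRing L] [Algebra K L]
    [AddCommGroup M] [Module K M] [Module L M] [IsScalarTower K L M] (P : ℙ L M) :
    finrank K (P.submodule.restrictScalars K) = finrank K L := by
  have h := finrank_mul_finrank K L P.submodule
  rw [P.finrank_submodule, mul_one] at h
  exact h.symm

theorem exists_spread {K E : Type*} [Field K] [Finite K] [AddCommGroup E] [Module K E]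
    [FiniteDimensional K E] {t : ℕ} (ht : t ≠ 0) (htE : t ∣ finrank K E) :
    ∃ (N : ℕ) (S : Fin N → Submodule K E), Pairwise (Function.onFun Disjoint S) ∧
      (∀ i, finrank K (S i) = t) ∧
      N * (Nat.card K ^ t - 1) = Nat.card K ^ finrank K E - 1 := by
  obtain ⟨m, hm⟩ := htE
  obtain ⟨p, _⟩ := CharP.exists K
  have : Fact p.Prime := ⟨CharP.char_is_prime K p⟩
  have : NeZero t := ⟨ht⟩
  let L := FiniteField.Extension K p t
  have hL : finrank K L = t := FiniteField.finrank_extension K p t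
  have hfinrank : finrank K (Fin m → L) = finrank K E := by
    rw [finrank_pi_fintype, Finset.sum_const, Finset.card_univ, Fintype.card_fin, hL, hm,
      smul_eq_mul, mul_comm]
  let e : (Fin m → L) ≃ₗ[K] E := .ofFinrankEq _ _ hfinrank
  have : Finite (Fin m → L) := Module.finite_of_finite K
  refine ⟨Nat.card (ℙ L (Fin m → L)), fun i ↦
    (((Finite.equivFin _).symm i).submodule.restrictScalars K).map (e : (Fin m → L) →ₗ[K] E),
    fun i j hij ↦ ?_, fun i ↦ ?_, ?_⟩
  · exact Submodule.disjoint_map e.injective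
      (disjoint_restrictScalars_submodule ((Finite.equivFin _).symm.injective.ne hij))
  · rw [LinearEquiv.finrank_map_eq, finrank_restrictScalars_submodule, hL]
  · rw [← FiniteField.natCard_extension K p t, ← Projectivization.card, ← hfinrank,
      Module.natCard_eq_pow_finrank (K := K)]

/-- The number of linearly independent `k`-tuples in an `m`-dimensional space over a field with
`q` elements. -/
def numIndepTuples (q m k : ℕ) : ℕ :=
  ∏ i ∈ Finset.range k, (q ^ m - q ^ i)

theorem natCard_linearIndependent {K E : Type*} [Field K] [Finite K] [AddCommGroup E] [Module K E]
    [FiniteDimensional K E] {k : ℕ} (hk : k ≤ finrank K E) :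
    Nat.card {x : Fin k → E // LinearIndependent K x} =
      numIndepTuples (Nat.card K) (finrank K E) k := by
  have := Fintype.ofFinite K
  have := Module.finite_of_finite K (M := E)
  rw [card_linearIndependent hk, numIndepTuples, Finset.prod_range, Nat.card_eq_fintype_card]

theorem orbit_linearEquiv_eq {K E ι : Type*} [Field K] [AddCommGroup E] [Module K E] [Finite ι]
    {a : ι → E} (ha : LinearIndependent K a) :
    orbit (E ≃ₗ[K] E) a = {x | LinearIndependent K x} := by
  refine Set.eq_of_subset_of_subset ?_ fun x hx ↦ ?_
  · rintro _ ⟨g, rfl⟩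
    exact ha.map' (g : E →ₗ[K] E) g.ker
  · have := Module.Finite.span_of_finite K (Set.finite_range a)
    obtain ⟨g, hg⟩ := Submodule.exists_linearEquiv_restrict_eq
      ((Basis.span ha).equiv (Basis.span hx) (.refl ι))
    refine ⟨g, funext fun i ↦ ?_⟩
    have := hg (Basis.span ha i)
    rw [Basis.equiv_apply, Basis.span_apply, Basis.span_apply] at this
    exact this.symm

theorem span_range_comp {K E E' ι : Type*} [Field K] [AddCommGroup E] [Module K E]
    [AddCommGroup E'] [Module K E'] (f : E →ₗ[K] E') (x : ι → E) :
    Submodule.span K (Set.range (f ∘ x)) = (Submodule.span K (Set.range x)).map f := by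
  rw [Set.range_comp, Submodule.map_span]

theorem exists_linearIndependent_span_eq {K E : Type*} [Field K] [AddCommGroup E] [Module K E]
    {W : Submodule K E} [FiniteDimensional K W] {k : ℕ} (hW : finrank K W = k) :
    ∃ x : Fin k → E, LinearIndependent K x ∧ Submodule.span K (Set.range x) = W := by
  let b := finBasisOfFinrankEq K W hW
  refine ⟨W.subtype ∘ b, b.linearIndependent.map' _ W.ker_subtype, ?_⟩
  rw [span_range_comp, b.span_eq, Submodule.map_top, Submodule.range_subtype]

theorem card_mul_le_of_forall_not_disjoint_span {K E : Type*} [Field K] [Finite K] [AddCommGroup E]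
    [Module K E] [FiniteDimensional K E] {t : ℕ} (ht : t ≠ 0) (htE : t ∣ finrank K E)
    {N : Finset (Fin t → E)} (hN : ∀ x ∈ N, LinearIndependent K x)
    (hmeet : ∀ x ∈ N, ∀ y ∈ N,
      ¬ Disjoint (Submodule.span K (Set.range x)) (Submodule.span K (Set.range y))) :
    #N * (Nat.card K ^ finrank K E - 1) ≤
      numIndepTuples (Nat.card K) (finrank K E) t * (Nat.card K ^ t - 1) := by
  obtain rfl | ⟨a, ha⟩ := N.eq_empty_or_nonempty
  · simp
  have : Finite E := Module.finite_of_finite K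
  have : Finite (E ≃ₗ[K] E) := DFunLike.finite _
  have horbit := orbit_linearEquiv_eq (hN a ha)
  obtain ⟨M, S, hS, hrank, hM⟩ := exists_spread ht htE
  choose f hf hfS using fun i ↦ exists_linearIndependent_span_eq (hrank i)
  have hbound : Fintype.card (Fin M) * #N ≤ (orbit (E ≃ₗ[K] E) a).ncard := by
    refine card_mul_card_le_ncard_orbit (f := f) (fun i ↦ ?_) (fun x hx ↦ ?_) fun g i j hi hj ↦ ?_
    · rw [horbit]
      exact hf i
    · rw [horbit]
      exact hN x hx
    · by_contra hij
      apply hmeet _ hi _ hj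
      have hspan (i : Fin M) :
          Submodule.span K (Set.range (g • f i)) = (S i).map (g : E →ₗ[K] E) := by
        rw [← hfS i]
        exact span_range_comp (g : E →ₗ[K] E) (f i)
      rw [hspan, hspan]
      exact Submodule.disjoint_map g.injective (hS hij)
  have ht_le : t ≤ finrank K E := by simpa using (hN a ha).fintype_card_le_finrank
  rw [Fintype.card_fin, horbit, ← Nat.card_coe_set_eq] at hbound
  rw [← hM, ← natCard_linearIndependent ht_le, ← mul_assoc, mul_comm #N]
  exact Nat.mul_le_mul_right _ hbound

section

variable {K V : Type*} [Field K] [AddCommGroup V] [Module K V] [Fintype V]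

open Classical in
/-- The linearly independent `k`-tuples of vectors of the subspace `G`, as tuples in the ambient
space. -/
noncomputable def indepTuples (k : ℕ) (G : Submodule K V) : Finset (Fin k → V) :=
  {x : Fin k → V | LinearIndependent K x ∧ Submodule.span K (Set.range x) ≤ G}

theorem mem_indepTuples {k : ℕ} {G : Submodule K V} {x : Fin k → V} :
    x ∈ indepTuples k G ↔ LinearIndependent K x ∧ Submodule.span K (Set.range x) ≤ G := by
  simp [indepTuples]

theorem indepTuples_eq_map (k : ℕ) (G : Submodule K V) [Fintype G] :
    indepTuples k G =
      (indepTuples k (⊤ : Submodule K G)).map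
        (Function.Embedding.subtype (· ∈ G)).arrowCongrRight := by
  ext x
  simp only [mem_indepTuples, le_top, and_true, Finset.mem_map]
  constructor
  · rintro ⟨hx, hxG⟩
    have hmem (i : Fin k) : x i ∈ G := hxG (Submodule.subset_span ⟨i, rfl⟩)
    exact ⟨fun i ↦ ⟨x i, hmem i⟩, .of_comp G.subtype hx, rfl⟩
  · rintro ⟨y, hy, rfl⟩
    refine ⟨hy.map' G.subtype G.ker_subtype, ?_⟩
    exact (span_range_comp G.subtype y).trans_le (Submodule.map_subtype_le G _)

theorem card_indepTuples [Finite K] {k : ℕ} {G : Submodule K V} (hk : k ≤ finrank K G) :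
    #(indepTuples k G) = numIndepTuples (Nat.card K) (finrank K G) k := by
  have := Fintype.ofFinite G
  rw [indepTuples_eq_map, Finset.card_map, ← natCard_linearIndependent hk]
  exact (Nat.subtype_card _ fun x ↦ by simp [mem_indepTuples]).symm

theorem card_mul_le_of_subset_indepTuples [Finite K] {t : ℕ} {G : Submodule K V} (ht : t ≠ 0)
    (htG : t ∣ finrank K G) {N : Finset (Fin t → V)} (hN : N ⊆ indepTuples t G)
    (hmeet : ∀ x ∈ N, ∀ y ∈ N,
      ¬ Disjoint (Submodule.span K (Set.range x)) (Submodule.span K (Set.range y))) :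
    #N * (Nat.card K ^ finrank K G - 1) ≤
      numIndepTuples (Nat.card K) (finrank K G) t * (Nat.card K ^ t - 1) := by
  have := Fintype.ofFinite G
  rw [indepTuples_eq_map, Finset.subset_map_iff] at hN
  obtain ⟨M, hM, rfl⟩ := hN
  rw [Finset.card_map]
  refine card_mul_le_of_forall_not_disjoint_span ht htG (fun x hx ↦ (mem_indepTuples.1 (hM hx)).1)
    fun x hx y hy hxy ↦ ?_
  apply hmeet _ (Finset.mem_map_of_mem _ hx) _ (Finset.mem_map_of_mem _ hy)
  change Disjoint (Submodule.span K (Set.range (G.subtype ∘ x)))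
    (Submodule.span K (Set.range (G.subtype ∘ y)))
  rw [span_range_comp, span_range_comp]
  exact Submodule.disjoint_map G.subtype_injective hxy

end

theorem pow_sub_pow_eq_mul {q m k : ℕ} (hk : k ≤ m) :
    q ^ m - q ^ k = q ^ k * (q ^ (m - k) - 1) := by
  rw [Nat.mul_sub, ← pow_add, mul_one, Nat.add_sub_cancel' hk]

theorem cast_pow_sub_one {R : Type*} [Ring R] {q : ℕ} (hq : 0 < q) (l : ℕ) :
    ((q ^ l - 1 : ℕ) : R) = (q : R) ^ l - 1 := by
  rw [Nat.cast_pred (pow_pos hq l), Nat.cast_pow]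

theorem numIndepTuples_le (q m k : ℕ) : numIndepTuples q m k ≤ q ^ (m * k) := by
  calc numIndepTuples q m k ≤ ∏ _i ∈ Finset.range k, q ^ m :=
        Finset.prod_le_prod' fun i _ ↦ Nat.sub_le _ _
    _ = q ^ (m * k) := by rw [Finset.prod_const, Finset.card_range, pow_mul]

theorem le_numIndepTuples {q m k : ℕ} (hq : 2 ≤ q) (hkm : k ≤ m) :
    q ^ ((m - 1) * k) ≤ numIndepTuples q m k := by
  calc q ^ ((m - 1) * k) = ∏ _i ∈ Finset.range k, q ^ (m - 1) := by
        rw [Finset.prod_const, Finset.card_range, pow_mul]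
    _ ≤ numIndepTuples q m k := Finset.prod_le_prod' fun i hi ↦ by
        have hi : i < m := (Finset.mem_range.1 hi).trans_le hkm
        have hpow : q ^ i ≤ q ^ (m - 1) := Nat.pow_le_pow_right (by omega) (by omega)
        have hmul : 2 * q ^ (m - 1) ≤ q ^ m := by
          rw [← Nat.sub_add_cancel (Nat.one_le_of_lt hi), pow_succ', Nat.add_sub_cancel]
          exact Nat.mul_le_mul_right _ hq
        omega

theorem numIndepTuples_pos {q m k : ℕ} (hq : 2 ≤ q) (hkm : k ≤ m) : 0 < numIndepTuples q m k :=
  (pow_pos (by omega) _).trans_le (le_numIndepTuples hq hkm)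

theorem numIndepTuples_succ_right (q m k : ℕ) :
    numIndepTuples q m (k + 1) = numIndepTuples q m k * (q ^ m - q ^ k) :=
  Finset.prod_range_succ _ _

theorem numIndepTuples_succ_succ (q m k : ℕ) :
    numIndepTuples q (m + 1) (k + 1) = (q ^ (m + 1) - 1) * (q ^ k * numIndepTuples q m k) := by
  have hpow (i : ℕ) : q ^ (m + 1) - q ^ (i + 1) = q * (q ^ m - q ^ i) := by
    rw [pow_succ', pow_succ', Nat.mul_sub]
  simp only [numIndepTuples, Finset.prod_range_succ', hpow, Finset.prod_mul_distrib,
    Finset.prod_const, Finset.card_range, pow_zero, mul_comm]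

theorem numIndepTuples_succ_left_mul {q m k : ℕ} (hq : 0 < q) (hk : k ≤ m) :
    numIndepTuples q (m + 1) k * (q ^ (m + 1 - k) - 1) =
      (q ^ (m + 1) - 1) * numIndepTuples q m k := by
  refine Nat.eq_of_mul_eq_mul_left (pow_pos hq k) ?_
  calc q ^ k * (numIndepTuples q (m + 1) k * (q ^ (m + 1 - k) - 1))
      = numIndepTuples q (m + 1) (k + 1) := by
        rw [numIndepTuples_succ_right, pow_sub_pow_eq_mul (by omega), mul_left_comm]
    _ = q ^ k * ((q ^ (m + 1) - 1) * numIndepTuples q m k) := by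
        rw [numIndepTuples_succ_succ, mul_left_comm]

theorem numIndepTuples_two_mul {q k : ℕ} (hq : 2 ≤ q) (hk : k ≠ 0) :
    numIndepTuples q (2 * k) k = (q ^ k + 1) * numIndepTuples q (2 * k - 1) k := by
  have hpos : 0 < q ^ k - 1 := Nat.sub_pos_of_lt (Nat.one_lt_pow hk hq)
  refine Nat.eq_of_mul_eq_mul_right hpos ?_
  have h := numIndepTuples_succ_left_mul (q := q) (m := 2 * k - 1) (k := k) (by omega) (by omega)
  rw [show 2 * k - 1 + 1 = 2 * k by omega, show 2 * k - k = k by omega] at h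
  obtain ⟨a, ha⟩ := Nat.exists_eq_add_of_lt hpos
  have ha : q ^ k = a + 2 := by omega
  have hsq : q ^ (2 * k) = (a + 1) * (a + 3) + 1 := by
    rw [two_mul, pow_add, ha]
    ring
  rw [h, hsq, ha, Nat.add_sub_cancel]
  simp only [Nat.add_succ_sub_one]
  ring

theorem gaussQ_eq_div {q m k : ℕ} (hq : 2 ≤ q) (hk : k ≤ m) :
    GaussQ q m k = numIndepTuples q m k / numIndepTuples q k k := by
  have hcast {l i : ℕ} (hi : i ≤ l) :
      ((q ^ l - q ^ i : ℕ) : ℚ) = q ^ i * ((q : ℚ) ^ (l - i) - 1) := by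
    rw [pow_sub_pow_eq_mul hi, Nat.cast_mul, Nat.cast_pow, cast_pow_sub_one (by omega)]
  rw [GaussQ, numIndepTuples, numIndepTuples, Nat.cast_prod, Nat.cast_prod,
    ← Finset.prod_div_distrib]
  refine Finset.prod_congr rfl fun i hi ↦ ?_
  have hik : i ≤ k := (Finset.mem_range.1 hi).le
  rw [hcast hik, hcast (hik.trans hk), mul_div_mul_left]
  exact pow_ne_zero _ (by norm_cast; omega)

theorem numIndepTuples_lt_mul_pow_sub_pow {q n k : ℕ} (hq : 2 ≤ q) (hn : 2 * (k + 1) < n) :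
    numIndepTuples q (2 * k + 1) (k + 1) <
      q ^ ((k + 2) * k) * numIndepTuples q k k * (q ^ n - q ^ (2 * (k + 1))) := by
  have hsub : q ^ (2 * (k + 1)) ≤ q ^ n - q ^ (2 * (k + 1)) := by
    have hle : q ^ (2 * (k + 1) + 1) ≤ q ^ n := Nat.pow_le_pow_right (by omega) hn
    have hmul : 2 * q ^ (2 * (k + 1)) ≤ q ^ (2 * (k + 1) + 1) := by
      rw [pow_succ']
      exact Nat.mul_le_mul_right _ hq
    omega
  have hexp : (2 * k + 1) * (k + 1) < (k + 2) * k + (k - 1) * k + 2 * (k + 1) := by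
    cases k with
    | zero => simp
    | succ k =>
      rw [Nat.add_sub_cancel]
      linarith
  calc numIndepTuples q (2 * k + 1) (k + 1)
      ≤ q ^ ((2 * k + 1) * (k + 1)) := numIndepTuples_le _ _ _
    _ < q ^ ((k + 2) * k + (k - 1) * k + 2 * (k + 1)) := Nat.pow_lt_pow_right hq hexp
    _ = q ^ ((k + 2) * k) * q ^ ((k - 1) * k) * q ^ (2 * (k + 1)) := by rw [pow_add, pow_add]
    _ ≤ _ := by gcongr; exact le_numIndepTuples hq le_rfl

theorem mul_eq_numIndepTuples_of_eq_gaussQ_div {q n t f : ℕ} (hq : 2 ≤ q)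
    (hn : 2 * t < n) (hf : (f : ℚ) = GaussQ q (n - 1) t / GaussQ q (2 * t - 1) t) {μ : ℚ}
    (hμ : μ * ((q : ℚ) ^ (n - t) - 1) = q ^ t - 1) :
    (f : ℚ) * (numIndepTuples q (2 * t - 1) t * (q ^ t + μ)) = numIndepTuples q n t := by
  have hne {m : ℕ} (hm : t ≤ m) : (numIndepTuples q m t : ℚ) ≠ 0 :=
    mod_cast (numIndepTuples_pos hq hm).ne'
  have hq1 : (1 : ℚ) < q := mod_cast hq
  have hfP : f * (numIndepTuples q (2 * t - 1) t : ℚ) = numIndepTuples q (n - 1) t := by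
    have hpos : t ≤ 2 * t - 1 := by omega
    rw [hf, gaussQ_eq_div hq (by omega), gaussQ_eq_div hq hpos,
      div_div_div_cancel_right₀ (hne le_rfl), div_mul_cancel₀ _ (hne hpos)]
  have hrec : (numIndepTuples q n t : ℚ) * ((q : ℚ) ^ (n - t) - 1) =
      ((q : ℚ) ^ n - 1) * numIndepTuples q (n - 1) t := by
    have h := numIndepTuples_succ_left_mul (q := q) (m := n - 1) (k := t) (by omega) (by omega)
    rw [Nat.sub_add_cancel (by omega)] at h
    simpa only [Nat.cast_mul, cast_pow_sub_one (R := ℚ) (zero_lt_two.trans_le hq)] using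
      congrArg (Nat.cast : ℕ → ℚ) h
  have hsub : (q : ℚ) ^ (n - t) - 1 ≠ 0 := (sub_pos.2 (one_lt_pow₀ hq1 (by omega))).ne'
  have hpow : (q : ℚ) ^ n = q ^ t * q ^ (n - t) := by rw [← pow_add, Nat.add_sub_cancel' (by omega)]
  refine mul_right_cancel₀ hsub ?_
  rw [hrec, ← hfP, hpow]
  linear_combination (f : ℚ) * numIndepTuples q (2 * t - 1) t * hμ

open Classical in
theorem card_pow_mul_card_indepTuples_le_card_filter {K V : Type*} [Field K] [AddCommGroup V]
    [Module K V] [Fintype V] {W C : Submodule K V} (hWC : Disjoint W C) {k : ℕ}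
    (hk : finrank K C = k) :
    Nat.card W ^ k * #(indepTuples k C) ≤
      #{y ∈ indepTuples k (W ⊔ C) | W ⊔ Submodule.span K (Set.range y) = W ⊔ C} := by
  have := Fintype.ofFinite W
  rw [show Nat.card W ^ k = #(Finset.univ : Finset (Fin k → W)) by simp, ← Finset.card_product]
  refine Finset.card_le_card_of_injOn (fun p i ↦ p.1 i + p.2 i) ?_ ?_
  · rintro ⟨w, z⟩ hwz
    obtain ⟨hz, hzC⟩ := mem_indepTuples.1 (Finset.mem_product.1 hwz).2
    have hspan : Submodule.span K (Set.range z) = C :=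
      Submodule.eq_of_le_of_finrank_eq hzC (by rw [finrank_span_eq_card hz, Fintype.card_fin, hk])
    have hmkQ : W.mkQ ∘ (fun i ↦ (w i : V) + z i) = W.mkQ ∘ z := by
      ext i
      simp
    have hsup : W ⊔ Submodule.span K (Set.range fun i ↦ (w i : V) + z i) = W ⊔ C := by
      rw [← hspan, ← Submodule.comap_map_mkQ, ← Submodule.comap_map_mkQ, ← span_range_comp, hmkQ,
        span_range_comp]
    simp only [Finset.coe_filter, Set.mem_ofPred_eq, mem_indepTuples]
    refine ⟨⟨.of_comp W.mkQ ?_, hsup ▸ le_sup_right⟩, hsup⟩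
    rw [hmkQ]
    refine hz.map ?_
    rwa [W.ker_mkQ, hspan, disjoint_comm]
  · rintro ⟨w, z⟩ hwz ⟨w', z'⟩ hwz' h
    have hz := (mem_indepTuples.1 (Finset.mem_product.1 hwz).2).2
    have hz' := (mem_indepTuples.1 (Finset.mem_product.1 hwz').2).2
    have hi (i : Fin k) : w i = w' i ∧ z i = z' i := by
      have hadd : (w i : V) + z i = w' i + z' i := congrFun h i
      have hzC : z i ∈ C := hz (Submodule.subset_span ⟨i, rfl⟩)
      have hzC' : z' i ∈ C := hz' (Submodule.subset_span ⟨i, rfl⟩)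
      have heq : (w i, (⟨z i, hzC⟩ : C)) = (w' i, ⟨z' i, hzC'⟩) :=
        AddSubgroup.add_injective_of_disjoint (H₁ := W.toAddSubgroup) (H₂ := C.toAddSubgroup)
          (AddSubgroup.disjoint_def.2 fun {_} ↦ Submodule.disjoint_def.1 hWC _) hadd
      simpa using heq
    exact Prod.ext (funext fun i ↦ (hi i).1) (funext fun i ↦ (hi i).2)

theorem le_card_filter_sup_span_eq {K V : Type*} [Field K] [AddCommGroup V] [Module K V]
    [Finite K] [Fintype V] {W G : Submodule K V} (hWG : W ≤ G) {k : ℕ}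
    (hk : finrank K G = finrank K W + k) :
    Nat.card K ^ (finrank K W * k) * numIndepTuples (Nat.card K) k k ≤
      #{y ∈ indepTuples k G | W ⊔ Submodule.span K (Set.range y) = G} := by
  obtain ⟨C, hdisj, rfl⟩ := IsModularLattice.exists_disjoint_and_sup_eq hWG
  have hC : finrank K C = k := by
    have := Submodule.finrank_sup_add_finrank_inf_eq W C
    rw [hdisj.eq_bot, finrank_bot] at this
    omega
  have hcard : #(indepTuples k C) = numIndepTuples (Nat.card K) k k := by
    rw [card_indepTuples hC.ge, hC]
  rw [pow_mul, ← natCard_eq_pow_finrank, ← hcard]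
  exact card_pow_mul_card_indepTuples_le_card_filter hdisj hC

open Classical in
theorem card_mul_card_compl_le_card_filter {K V : Type*} [Field K] [AddCommGroup V] [Module K V]
    [Fintype V] {k : ℕ} (G : Submodule K V) {S : Finset (Fin k → V)} (hS : S ⊆ indepTuples k G) :
    #S * (Nat.card V - Nat.card G) ≤
      #{x ∈ indepTuples (k + 1) (⊤ : Submodule K V) | x ∘ Fin.succ ∈ S ∧ x 0 ∉ G} := by
  have hcompl : #{v : V | v ∉ G} = Nat.card V - Nat.card G := by
    rw [← Set.ncard_coe_finset, Finset.coe_filter_univ]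
    exact Set.ncard_compl (G : Set V)
  rw [← hcompl, ← Finset.card_product]
  refine Finset.card_le_card_of_injOn (fun p ↦ Fin.cons p.2 p.1) ?_ ?_
  · rintro ⟨y, v⟩ hyv
    obtain ⟨hy, hv⟩ := Finset.mem_product.1 hyv
    obtain ⟨hindep, hyG⟩ := mem_indepTuples.1 (hS hy)
    have hvG : v ∉ G := by simpa using hv
    have hvy : v ∉ Submodule.span K (Set.range y) := fun h ↦ hvG (hyG h)
    simpa [mem_indepTuples, linearIndependent_finCons, hindep, hy, hvG] using hvy
  · rintro ⟨y, v⟩ - ⟨y', v'⟩ - h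
    obtain ⟨rfl, rfl⟩ := Fin.cons_injective2 h
    rfl

open Classical in
theorem card_mul_le_of_pairwise_inf_le {K V : Type*} [Field K] [Finite K] [AddCommGroup V]
    [Module K V] [FiniteDimensional K V] {S : Finset (Submodule K V)} {A : Submodule K V} {d : ℕ}
    (hA : ∀ G ∈ S, A ≤ G) (hd : ∀ G ∈ S, finrank K G = d)
    (hS : (S : Set (Submodule K V)).Pairwise fun G G' ↦ G ⊓ G' ≤ A) :
    #S * (Nat.card K ^ (d - finrank K A) - 1) ≤
      Nat.card K ^ (finrank K V - finrank K A) - 1 := by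
  have : Finite V := Module.finite_of_finite K
  have := Fintype.ofFinite V
  let D (G : Submodule K V) : Finset V := {v | v ∈ G ∧ v ∉ A}
  have hD (G : Submodule K V) (hG : A ≤ G) :
      #(D G) = Nat.card K ^ finrank K A * (Nat.card K ^ (finrank K G - finrank K A) - 1) := by
    rw [← pow_sub_pow_eq_mul (Submodule.finrank_mono hG), ← natCard_eq_pow_finrank,
      ← natCard_eq_pow_finrank, ← Set.ncard_coe_finset, Finset.coe_filter_univ]
    exact Set.ncard_sdiff hG
  have hdisj : (S : Set (Submodule K V)).PairwiseDisjoint D := by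
    refine fun G hG G' hG' hne ↦ Finset.disjoint_left.2 fun v hv hv' ↦ ?_
    obtain ⟨hvG, hvA⟩ := (Finset.mem_filter_univ v).1 hv
    obtain ⟨hvG', -⟩ := (Finset.mem_filter_univ v).1 hv'
    exact hvA (hS hG hG' hne ⟨hvG, hvG'⟩)
  refine Nat.le_of_mul_le_mul_left ?_ (pow_pos (Nat.card_pos (α := K)) (finrank K A))
  calc Nat.card K ^ finrank K A * (#S * (Nat.card K ^ (d - finrank K A) - 1))
      = ∑ G ∈ S, #(D G) := by
        rw [Finset.sum_const_nat fun G hG ↦ by rw [hD G (hA G hG), hd G hG], mul_left_comm]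
    _ = #(S.biUnion D) := (Finset.card_biUnion hdisj).symm
    _ ≤ #(D ⊤) := Finset.card_le_card <| Finset.biUnion_subset.2 fun G _ v hv ↦ by
        simp_all [D]
    _ = Nat.card K ^ finrank K A * (Nat.card K ^ (finrank K V - finrank K A) - 1) := by
        rw [hD ⊤ le_top, finrank_top]

section

variable {K V : Type*} [Field K] [AddCommGroup V] [Module K V]

/-- `A` is an own subspace of `G` relative to the family `F`: `A` lies in `G` and in no other member
of `F`. -/
def IsOwn (F : Set (Submodule K V)) (A G : Submodule K V) : Prop :=
  A ≤ G ∧ ∀ G' ∈ F, A ≤ G' → G' = G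

/-- `G` meets some other member of `F` in dimension greater than `r`. -/
def MeetsLargely (F : Set (Submodule K V)) (r : ℕ) (G : Submodule K V) : Prop :=
  ∃ G' ∈ F, G' ≠ G ∧ r < finrank K ↥(G ⊓ G')

/-- The tuple `x` is attached to `G`: the tail of `x` spans an own subspace of `G`, but the head
of `x` is not in `G`. -/
def IsAttached {k : ℕ} (F : Set (Submodule K V)) (G : Submodule K V) (x : Fin (k + 1) → V) : Prop :=
  IsOwn F (Submodule.span K (Set.range (x ∘ Fin.succ))) G ∧ x 0 ∉ G

variable {F : Set (Submodule K V)} {G G' A B C : Submodule K V}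

theorem IsCoverFree.isOwn_of_le_sup (hF : IsCoverFree F) (hanti : IsAntichain (· ≤ ·) F)
    (hG : G ∈ F) (hG' : G' ∈ F) (hne : G' ≠ G) (hC : C ≤ G) (hle : G ≤ (G ⊓ G') ⊔ C) :
    IsOwn F C G := by
  refine ⟨hC, fun G₂ hG₂ hCG₂ ↦ ?_⟩
  by_contra hne₂
  obtain rfl | hne' := eq_or_ne G' G₂
  · exact hanti hG hG' hne.symm (hle.trans (sup_le inf_le_right hCG₂))
  · exact hF ⟨G, G', G₂, hG, hG', hG₂, hne.symm, Ne.symm hne₂, hne',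
      hle.trans (sup_le_sup_left (le_inf hC hCG₂) _)⟩

theorem IsCoverFree.isOwn_or_isOwn_of_sup_eq (hF : IsCoverFree F) (hanti : IsAntichain (· ≤ ·) F)
    (hG : G ∈ F) (hAB : A ⊔ B = G) : IsOwn F A G ∨ IsOwn F B G := by
  have hA : A ≤ G := hAB ▸ le_sup_left
  have hB : B ≤ G := hAB ▸ le_sup_right
  refine or_iff_not_imp_left.2 fun hnot ↦ ?_
  obtain ⟨G', hG', hAG', hne⟩ : ∃ G' ∈ F, A ≤ G' ∧ G' ≠ G := by
    simpa [IsOwn, hA] using hnot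
  exact hF.isOwn_of_le_sup hanti hG hG' hne hB
    (hAB.ge.trans (sup_le_sup_right (le_inf hA hAG') B))

theorem isAntichain_of_finrank_eq [FiniteDimensional K V] {d : ℕ}
    (hd : ∀ G ∈ F, finrank K G = d) : IsAntichain (· ≤ ·) F :=
  fun _ hG _ hG' hne hle ↦
    hne (Submodule.eq_of_le_of_finrank_eq hle ((hd _ hG).trans (hd _ hG').symm))

theorem IsAttached.not_span_le {k : ℕ} {x : Fin (k + 1) → V} (h : IsAttached F G x)
    (hG' : G' ∈ F) : ¬ Submodule.span K (Set.range x) ≤ G' := by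
  intro hle
  obtain rfl := h.1.2 G' hG' ((Submodule.span_mono (Set.range_comp_subset_range _ _)).trans hle)
  exact h.2 (hle (Submodule.subset_span ⟨0, rfl⟩))

end

open Classical in
theorem card_filter_not_isOwn_le {K V : Type*} [Field K] [Finite K] [AddCommGroup V] [Module K V]
    [Fintype V] {F : Set (Submodule K V)} {G : Submodule K V} {t : ℕ} (ht : t ≠ 0)
    (hF : IsCoverFree F) (hanti : IsAntichain (· ≤ ·) F) (hG : G ∈ F) (hd : finrank K G = 2 * t) :
    #{x ∈ indepTuples t G | ¬ IsOwn F (Submodule.span K (Set.range x)) G} ≤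
      numIndepTuples (Nat.card K) (2 * t - 1) t := by
  have hq : 2 ≤ Nat.card K := Finite.one_lt_card
  have hpos : 0 < Nat.card K ^ (2 * t) - 1 := Nat.sub_pos_of_lt (Nat.one_lt_pow (by omega) hq)
  have hrec := numIndepTuples_succ_left_mul (q := Nat.card K) (m := 2 * t - 1) (k := t)
    (by omega) (by omega)
  rw [show 2 * t - 1 + 1 = 2 * t by omega, show 2 * t - t = t by omega] at hrec
  refine Nat.le_of_mul_le_mul_right ?_ hpos
  rw [mul_comm (numIndepTuples _ _ _), ← hrec, ← hd]
  refine card_mul_le_of_subset_indepTuples ht (hd ▸ Dvd.intro_left 2 rfl)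
    (Finset.filter_subset _ _) fun x hx y hy hxy ↦ ?_
  rw [Finset.mem_filter, mem_indepTuples] at hx hy
  obtain ⟨⟨hxind, hxG⟩, hxown⟩ := hx
  obtain ⟨⟨hyind, hyG⟩, hyown⟩ := hy
  have hsup : Submodule.span K (Set.range x) ⊔ Submodule.span K (Set.range y) = G := by
    refine Submodule.eq_of_le_of_finrank_eq (sup_le hxG hyG) ?_
    have hdim := Submodule.finrank_sup_add_finrank_inf_eq
      (Submodule.span K (Set.range x)) (Submodule.span K (Set.range y))
    rw [hxy.eq_bot, finrank_bot, finrank_span_eq_card hxind, finrank_span_eq_card hyind,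
      Fintype.card_fin] at hdim
    omega
  exact (hF.isOwn_or_isOwn_of_sup_eq hanti hG hsup).elim hxown hyown

open Classical in
theorem numIndepTuples_lt_card_isAttached {K V : Type*} [Field K] [Finite K] [AddCommGroup V]
    [Module K V] [Fintype V] {F : Set (Submodule K V)} {G : Submodule K V} {k : ℕ}
    (hF : IsCoverFree F) (hanti : IsAntichain (· ≤ ·) F) (hG : G ∈ F)
    (hd : finrank K G = 2 * (k + 1)) (hn : 2 * (k + 1) < finrank K V)
    (hlarge : MeetsLargely F (k + 1) G) :
    numIndepTuples (Nat.card K) (2 * k + 1) (k + 1) <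
      #{x ∈ indepTuples (k + 1) (⊤ : Submodule K V) | IsAttached F G x} := by
  obtain ⟨G', hG', hne, hinf⟩ := hlarge
  obtain ⟨w, hw⟩ := exists_linearIndependent_of_le_finrank (R := K) (M := ↥(G ⊓ G')) hinf
  set W : Submodule K V := Submodule.span K (Set.range ((G ⊓ G').subtype ∘ w))
  have hWinf : W ≤ G ⊓ G' := (span_range_comp _ w).trans_le (Submodule.map_subtype_le _ _)
  have hWdim : finrank K W = k + 2 := by
    rw [finrank_span_eq_card (hw.map' _ (Submodule.ker_subtype _)), Fintype.card_fin]
  set S := {y ∈ indepTuples k G | W ⊔ Submodule.span K (Set.range y) = G}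
  have hScard : Nat.card K ^ ((k + 2) * k) * numIndepTuples (Nat.card K) k k ≤ #S := by
    rw [← hWdim]
    exact le_card_filter_sup_span_eq (hWinf.trans inf_le_left) (by omega)
  have hown {y : Fin k → V} (hy : y ∈ S) : IsOwn F (Submodule.span K (Set.range y)) G := by
    obtain ⟨hyG, hsup⟩ := Finset.mem_filter.1 hy
    exact hF.isOwn_of_le_sup hanti hG hG' hne (mem_indepTuples.1 hyG).2
      (hsup.ge.trans (sup_le_sup_right hWinf _))
  calc numIndepTuples (Nat.card K) (2 * k + 1) (k + 1)
      < Nat.card K ^ ((k + 2) * k) * numIndepTuples (Nat.card K) k k *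
          (Nat.card K ^ finrank K V - Nat.card K ^ (2 * (k + 1))) :=
        numIndepTuples_lt_mul_pow_sub_pow Finite.one_lt_card hn
    _ ≤ #S * (Nat.card V - Nat.card G) := by
        rw [natCard_eq_pow_finrank (K := K) (V := V), natCard_eq_pow_finrank (K := K) (V := G), hd]
        exact Nat.mul_le_mul_right _ hScard
    _ ≤ _ := card_mul_card_compl_le_card_filter G (Finset.filter_subset _ _)
    _ ≤ _ := Finset.card_le_card <| Finset.monotone_filter_right _ fun x _ hx ↦ ⟨hown hx.1, hx.2⟩

section

variable {K V : Type*} [Field K] [AddCommGroup V] [Module K V] {k : ℕ}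

/-- `G` claims the tuple `x`: the span of `x` is an own subspace of `G`, or `G` meets another member
of `F` in more than `k + 1` dimensions and `x` is attached to `G`. -/
def Claims (F : Set (Submodule K V)) (G : Submodule K V) (x : Fin (k + 1) → V) : Prop :=
  IsOwn F (Submodule.span K (Set.range x)) G ∨ MeetsLargely F (k + 1) G ∧ IsAttached F G x

open Classical in
/-- The share of the tuple `x` given to `G` in the double count. Members that meet
another one largely give up their unclaimed tuples, so that the members with share `μ` of `x` meet
pairwise in the span of `x` only. -/
noncomputable def share (F : Set (Submodule K V)) (μ : ℚ) (G : Submodule K V)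
    (x : Fin (k + 1) → V) : ℚ :=
  if Claims F G x then 1
  else if Submodule.span K (Set.range x) ≤ G ∧ ¬ MeetsLargely F (k + 1) G then μ else 0

theorem Claims.eq_of_span_le {F : Set (Submodule K V)} {G G' : Submodule K V}
    {x : Fin (k + 1) → V} (h : Claims F G x) (hG' : G' ∈ F)
    (hle : Submodule.span K (Set.range x) ≤ G') : G' = G :=
  h.elim (fun hown ↦ hown.2 G' hG' hle) fun hatt ↦ absurd hle (hatt.2.not_span_le hG')

theorem Claims.eq {F : Set (Submodule K V)} {G G' : Submodule K V} {x : Fin (k + 1) → V}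
    (h : Claims F G x) (h' : Claims F G' x) (hG : G ∈ F) (hG' : G' ∈ F) : G' = G := by
  obtain hown' | ⟨-, hatt'⟩ := id h'
  · exact h.eq_of_span_le hG' hown'.1
  · obtain hown | ⟨-, hatt⟩ := h
    · exact (h'.eq_of_span_le hG hown.1).symm
    · exact hatt.1.2 G' hG' hatt'.1.1

theorem share_nonneg (F : Set (Submodule K V)) {μ : ℚ} (hμ : 0 ≤ μ) (G : Submodule K V)
    (x : Fin (k + 1) → V) : 0 ≤ share F μ G x := by
  unfold share
  split_ifs
  exacts [zero_le_one, hμ, le_rfl]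

variable {F : Finset (Submodule K V)} {x : Fin (k + 1) → V}

theorem sum_share_of_claims (μ : ℚ) {G : Submodule K V} (hG : G ∈ F)
    (h : Claims (F : Set (Submodule K V)) G x) : ∑ G' ∈ F, share F μ G' x = 1 := by
  rw [Finset.sum_eq_single_of_mem G hG, share, if_pos h]
  intro G' hG' hne
  rw [share, if_neg fun h' ↦ hne (h.eq h' hG hG'),
    if_neg fun hle ↦ hne (h.eq_of_span_le hG' hle.1)]

open Classical in
theorem sum_share_of_not_claims (μ : ℚ) (h : ∀ G ∈ F, ¬ Claims (F : Set (Submodule K V)) G x) :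
    ∑ G ∈ F, share F μ G x =
      #{G ∈ F | Submodule.span K (Set.range x) ≤ G ∧
        ¬ MeetsLargely (F : Set (Submodule K V)) (k + 1) G} * μ := by
  rw [← nsmul_eq_mul, ← Finset.sum_const, Finset.sum_filter]
  exact Finset.sum_congr rfl fun G hG ↦ if_neg (h G hG)

theorem sum_share_le_one [Finite K] [FiniteDimensional K V] {μ : ℚ}
    (hd : ∀ G ∈ F, finrank K G = 2 * (k + 1)) (hn : k + 1 < finrank K V)
    (hμ : μ * ((Nat.card K : ℚ) ^ (finrank K V - (k + 1)) - 1) = (Nat.card K : ℚ) ^ (k + 1) - 1)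
    (hx : LinearIndependent K x) : ∑ G ∈ F, share F μ G x ≤ 1 := by
  classical
  by_cases h : ∃ G ∈ F, Claims (F : Set (Submodule K V)) G x
  · obtain ⟨G, hG, hclaim⟩ := h
    exact (sum_share_of_claims μ hG hclaim).le
  · push Not at h
    rw [sum_share_of_not_claims μ h]
    set A := Submodule.span K (Set.range x) with hA
    set S := {G ∈ F | A ≤ G ∧ ¬ MeetsLargely (F : Set (Submodule K V)) (k + 1) G}
    have hAdim : finrank K A = k + 1 := by rw [hA, finrank_span_eq_card hx, Fintype.card_fin]
    have hinf : (S : Set (Submodule K V)).Pairwise fun G G' ↦ G ⊓ G' ≤ A := by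
      intro G hG G' hG' hne
      obtain ⟨-, hAG, hsmall⟩ := Finset.mem_filter.1 hG
      obtain ⟨hGF', hAG', -⟩ := Finset.mem_filter.1 hG'
      refine (Submodule.eq_of_le_of_finrank_le (le_inf hAG hAG') ?_).ge
      rw [hAdim]
      by_contra hlt
      exact hsmall ⟨G', hGF', hne.symm, not_le.1 hlt⟩
    have hbound := card_mul_le_of_pairwise_inf_le (d := 2 * (k + 1))
      (fun G hG ↦ (Finset.mem_filter.1 hG).2.1) (fun G hG ↦ hd G (Finset.mem_filter.1 hG).1) hinf
    rw [hAdim, show 2 * (k + 1) - (k + 1) = k + 1 by omega] at hbound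
    have hq : 1 < Nat.card K := Finite.one_lt_card
    have hpos : 0 < (Nat.card K : ℚ) ^ (finrank K V - (k + 1)) - 1 :=
      sub_pos.2 (one_lt_pow₀ (mod_cast hq) (by omega))
    refine le_of_mul_le_mul_right ?_ hpos
    rw [mul_assoc, hμ, one_mul, ← cast_pow_sub_one Nat.card_pos, ← cast_pow_sub_one Nat.card_pos]
    exact_mod_cast hbound

end

section

variable {K V : Type*} [Field K] [Finite K] [AddCommGroup V] [Module K V] [Fintype V]
  {F : Set (Submodule K V)} {G : Submodule K V} {k : ℕ} {μ : ℚ}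

open Classical in
theorem card_isOwn_add_card_not_isOwn (F : Set (Submodule K V)) (hd : finrank K G = 2 * (k + 1)) :
    #{x ∈ indepTuples (k + 1) G | IsOwn F (Submodule.span K (Set.range x)) G} +
        #{x ∈ indepTuples (k + 1) G | ¬ IsOwn F (Submodule.span K (Set.range x)) G} =
      (Nat.card K ^ (k + 1) + 1) * numIndepTuples (Nat.card K) (2 * k + 1) (k + 1) := by
  rw [Finset.card_filter_add_card_filter_not, card_indepTuples (by omega), hd]
  exact numIndepTuples_two_mul Finite.one_lt_card k.succ_ne_zero

theorem le_sum_share_of_not_meetsLargely (hF : IsCoverFree F) (hanti : IsAntichain (· ≤ ·) F)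
    (hG : G ∈ F) (hd : finrank K G = 2 * (k + 1)) (hμ : 0 ≤ μ) (hμ' : μ ≤ 1)
    (h : ¬ MeetsLargely F (k + 1) G) :
    numIndepTuples (Nat.card K) (2 * k + 1) (k + 1) * ((Nat.card K : ℚ) ^ (k + 1) + μ) ≤
      ∑ x ∈ indepTuples (k + 1) (⊤ : Submodule K V), share F μ G x := by
  classical
  set e := numIndepTuples (Nat.card K) (2 * k + 1) (k + 1)
  set own := {x ∈ indepTuples (k + 1) G | IsOwn F (Submodule.span K (Set.range x)) G}
  set shared := {x ∈ indepTuples (k + 1) G | ¬ IsOwn F (Submodule.span K (Set.range x)) G}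
  have hshared : (#shared : ℚ) ≤ e :=
    mod_cast card_filter_not_isOwn_le k.succ_ne_zero hF hanti hG hd
  have htotal : (#own + #shared : ℚ) = (Nat.card K ^ (k + 1) + 1) * e :=
    mod_cast card_isOwn_add_card_not_isOwn F hd
  have hsub : indepTuples (k + 1) G ⊆ indepTuples (k + 1) (⊤ : Submodule K V) := fun x hx ↦
    mem_indepTuples.2 ⟨(mem_indepTuples.1 hx).1, le_top⟩
  calc e * ((Nat.card K : ℚ) ^ (k + 1) + μ)
      ≤ #own + #shared * μ := by
        linear_combination mul_le_mul_of_nonneg_right hshared (sub_nonneg.2 hμ') - htotal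
    _ = ∑ x ∈ indepTuples (k + 1) G,
          if IsOwn F (Submodule.span K (Set.range x)) G then 1 else μ := by
        rw [Finset.sum_ite, Finset.sum_const, Finset.sum_const, nsmul_eq_mul, nsmul_eq_mul, mul_one]
    _ = ∑ x ∈ indepTuples (k + 1) G, share F μ G x := Finset.sum_congr rfl fun x hx ↦ by
        simp [share, Claims, h, (mem_indepTuples.1 hx).2]
    _ ≤ _ := Finset.sum_le_sum_of_subset_of_nonneg hsub fun x _ _ ↦ share_nonneg F hμ G x

theorem lt_sum_share_of_meetsLargely (hF : IsCoverFree F) (hanti : IsAntichain (· ≤ ·) F)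
    (hG : G ∈ F) (hd : finrank K G = 2 * (k + 1)) (hn : 2 * (k + 1) < finrank K V) (hμ : μ ≤ 1)
    (h : MeetsLargely F (k + 1) G) :
    numIndepTuples (Nat.card K) (2 * k + 1) (k + 1) * ((Nat.card K : ℚ) ^ (k + 1) + μ) <
      ∑ x ∈ indepTuples (k + 1) (⊤ : Submodule K V), share F μ G x := by
  classical
  set e := numIndepTuples (Nat.card K) (2 * k + 1) (k + 1)
  set own := {x ∈ indepTuples (k + 1) G | IsOwn F (Submodule.span K (Set.range x)) G}
  set shared := {x ∈ indepTuples (k + 1) G | ¬ IsOwn F (Submodule.span K (Set.range x)) G}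
  set attached := {x ∈ indepTuples (k + 1) (⊤ : Submodule K V) | IsAttached F G x}
  have hshared : (#shared : ℚ) ≤ e :=
    mod_cast card_filter_not_isOwn_le k.succ_ne_zero hF hanti hG hd
  have htotal : (#own + #shared : ℚ) = (Nat.card K ^ (k + 1) + 1) * e :=
    mod_cast card_isOwn_add_card_not_isOwn F hd
  have hattached : (e : ℚ) < #attached :=
    mod_cast numIndepTuples_lt_card_isAttached hF hanti hG hd hn h
  have hdisj : Disjoint own attached := Finset.disjoint_left.2 fun x hx hx' ↦
    (Finset.mem_filter.1 hx').2.not_span_le hG (Finset.mem_filter.1 hx).2.1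
  have hsub : own ∪ attached ⊆ {x ∈ indepTuples (k + 1) (⊤ : Submodule K V) | Claims F G x} := by
    intro x hx
    simp only [own, attached, Finset.mem_union, Finset.mem_filter, mem_indepTuples] at hx ⊢
    obtain ⟨⟨hx, -⟩, hown⟩ | ⟨hx, hatt⟩ := hx
    · exact ⟨⟨hx, le_top⟩, .inl hown⟩
    · exact ⟨hx, .inr ⟨h, hatt⟩⟩
  calc e * ((Nat.card K : ℚ) ^ (k + 1) + μ)
      < #own + #attached := by
        linear_combination hshared + hattached - htotal + (e : ℚ) * hμ
    _ = #(own ∪ attached) := by rw [Finset.card_union_of_disjoint hdisj, Nat.cast_add]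
    _ ≤ #{x ∈ indepTuples (k + 1) (⊤ : Submodule K V) | Claims F G x} :=
        mod_cast Finset.card_le_card hsub
    _ = _ := by
        rw [Finset.natCast_card_filter]
        exact Finset.sum_congr rfl fun x _ ↦ by simp [share, h]

end

theorem not_meetsLargely_and_sum_share_eq_one {K V : Type*} [Field K] [Finite K] [AddCommGroup V]
    [Module K V] [FiniteDimensional K V] {F : Finset (Submodule K V)} {k : ℕ} {μ : ℚ}
    (hF : IsCoverFree (F : Set (Submodule K V)))
    (hd : ∀ G ∈ F, finrank K G = 2 * (k + 1)) (hn : 2 * (k + 1) < finrank K V)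
    (hμ : μ * ((Nat.card K : ℚ) ^ (finrank K V - (k + 1)) - 1) = (Nat.card K : ℚ) ^ (k + 1) - 1)
    (hcard : #F * (numIndepTuples (Nat.card K) (2 * k + 1) (k + 1) *
      ((Nat.card K : ℚ) ^ (k + 1) + μ)) =
        numIndepTuples (Nat.card K) (finrank K V) (k + 1)) :
    (∀ G ∈ F, ¬ MeetsLargely (F : Set (Submodule K V)) (k + 1) G) ∧
      ∀ x : Fin (k + 1) → V, LinearIndependent K x → ∑ G ∈ F, share F μ G x = 1 := by
  have : Finite V := Module.finite_of_finite K
  have := Fintype.ofFinite V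
  have hanti := isAntichain_of_finrank_eq (F := (F : Set (Submodule K V))) hd
  have hq : (1 : ℚ) < Nat.card K := mod_cast Finite.one_lt_card
  have hpos {l : ℕ} (hl : l ≠ 0) : 0 < (Nat.card K : ℚ) ^ l - 1 :=
    sub_pos.2 (one_lt_pow₀ hq hl)
  have hμ0 : 0 ≤ μ := by
    refine nonneg_of_mul_nonneg_left ?_ (hpos (l := finrank K V - (k + 1)) (by omega))
    rw [hμ]
    exact (hpos k.succ_ne_zero).le
  have hμ1 : μ ≤ 1 := by
    refine le_of_mul_le_mul_right ?_ (hpos (l := finrank K V - (k + 1)) (by omega))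
    rw [hμ, one_mul]
    gcongr
    · exact hq.le
    · omega
  have hX : #(indepTuples (k + 1) (⊤ : Submodule K V)) =
      numIndepTuples (Nat.card K) (finrank K V) (k + 1) := by
    rw [card_indepTuples (by rw [finrank_top]; omega), finrank_top]
  have hrow (G : Submodule K V) (hG : G ∈ F) :=
    le_sum_share_of_not_meetsLargely hF hanti hG (hd G hG) hμ0 hμ1
  have hrow' (G : Submodule K V) (hG : G ∈ F) :=
    lt_sum_share_of_meetsLargely hF hanti hG (hd G hG) hn hμ1
  obtain ⟨hrows, hcols⟩ := sum_eq_of_le_sum_of_sum_le (f := share (F : Set (Submodule K V)) μ)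
    (fun G hG ↦ (em _).elim (fun h ↦ (hrow' G hG h).le) (hrow G hG))
    (fun x hx ↦ sum_share_le_one hd (by omega) hμ (mem_indepTuples.1 hx).1)
    (by rw [nsmul_eq_mul, nsmul_eq_mul, mul_one, hcard, hX])
  exact ⟨fun G hG h ↦ (hrow' G hG h).ne' (hrows G hG),
    fun x hx ↦ hcols x (mem_indepTuples.2 ⟨hx, le_top⟩)⟩

open Classical in
theorem card_filter_eq_one_or_mul_eq_one {K V : Type*} [Field K] [AddCommGroup V] [Module K V]
    [FiniteDimensional K V] {F : Finset (Submodule K V)} {k : ℕ} {μ : ℚ} {A : Submodule K V}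
    (hlarge : ∀ G ∈ F, ¬ MeetsLargely (F : Set (Submodule K V)) (k + 1) G)
    (hshare : ∀ x : Fin (k + 1) → V, LinearIndependent K x → ∑ G ∈ F, share F μ G x = 1)
    (hA : finrank K A = k + 1) :
    #{G ∈ F | A ≤ G} = 1 ∨ #{G ∈ F | A ≤ G} * μ = 1 := by
  obtain ⟨x, hx, rfl⟩ := exists_linearIndependent_span_eq hA
  by_cases h : ∃ G ∈ F, Claims (F : Set (Submodule K V)) G x
  · obtain ⟨G, hG, hown | hatt⟩ := h
    · refine .inl (Finset.card_eq_one.2 ⟨G, Finset.eq_singleton_iff_unique_mem.2 ?_⟩)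
      exact ⟨Finset.mem_filter.2 ⟨hG, hown.1⟩, fun G' hG' ↦
        hown.2 G' (Finset.mem_filter.1 hG').1 (Finset.mem_filter.1 hG').2⟩
    · exact absurd hatt.1 (hlarge G hG)
  · push Not at h
    right
    rw [← hshare x hx, sum_share_of_not_claims μ h]
    congr 3
    exact Finset.filter_congr fun G hG ↦ (and_iff_left (hlarge G hG)).symm

theorem stmt14 (q n t : ℕ) (K : Type*) [Field K] [Fintype K] (hK : Fintype.card K = q)
    (V : Type*) [AddCommGroup V] [Module K V] [FiniteDimensional K V]
    (hV : Module.finrank K V = n) (ht : 1 ≤ t) (hn : 2 * t + 1 ≤ n)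
    (F : Set (Submodule K V)) (hdim : ∀ A ∈ F, Module.finrank K A = 2 * t)
    (hcf : IsCoverFree F)
    (hcard : (F.ncard : ℚ) = GaussQ q (n - 1) t / GaussQ q (2 * t - 1) t) :
    ∀ A : Submodule K V, Module.finrank K A = t →
      {G ∈ F | A ≤ G}.ncard = 1 ∨
      ({G ∈ F | A ≤ G}.ncard : ℚ) = ((q : ℚ) ^ (n - t) - 1) / ((q : ℚ) ^ t - 1) := by
  classical
  intro A hA
  obtain ⟨k, rfl⟩ := Nat.exists_eq_add_of_le' ht
  have : Finite V := Module.finite_of_finite K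
  lift F to Finset (Submodule K V) using F.toFinite
  rw [← Nat.card_eq_fintype_card] at hK
  subst hK hV
  have hq : 2 ≤ Nat.card K := Finite.one_lt_card
  have hpos {l : ℕ} (hl : l ≠ 0) : (Nat.card K : ℚ) ^ l - 1 ≠ 0 :=
    (sub_pos.2 (one_lt_pow₀ (mod_cast hq) hl)).ne'
  set μ : ℚ := ((Nat.card K : ℚ) ^ (k + 1) - 1) / ((Nat.card K : ℚ) ^ (finrank K V - (k + 1)) - 1)
  have hμ := div_mul_cancel₀ ((Nat.card K : ℚ) ^ (k + 1) - 1)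
    (hpos (l := finrank K V - (k + 1)) (by omega))
  rw [Set.ncard_coe_finset] at hcard
  obtain ⟨hlarge, hshare⟩ := not_meetsLargely_and_sum_share_eq_one hcf hdim (by omega) hμ
    (mul_eq_numIndepTuples_of_eq_gaussQ_div hq (by omega) hcard hμ)
  have hncard : {G ∈ (F : Set (Submodule K V)) | A ≤ G}.ncard = #{G ∈ F | A ≤ G} := by
    rw [← Set.ncard_coe_finset, Finset.coe_filter]
    rfl
  rw [hncard, ← inv_div]
  exact (card_filter_eq_one_or_mul_eq_one hlarge hshare hA).imp_right eq_inv_of_mul_eq_one_left
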